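/- For all x, z ∈ W_N, 1 ≤ n < N, h ∈ ℤ and integers 0 < m < M: Σ_{y ∈ W_N, y_n < h} det[(∇(b_{(i,j]}) w_j(· | (0,m]))(y_j − x_i)]_{i,j} · det[(∇(b_{(i,j]}) w_j(· | (m,M]))(z_j − y_i)]_{i,j} = Σ_{y ∈ W_N, y_n < h} det[(∇(b_{(i,n]}) w_j(· | (0,m]))(y_j − x_i)]_{i,j} · det[(∇(b_{(n,j]}) w_j(· | (m,M]))(z_j − y_i)]_{i,j}, where in each determinant the operator acts on the displayed function of its integer argument and is then evaluated at the indicated point. All sums have only finitely many nonzero terms. -/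

import Mathlib

/-!
The two sides are sums over the same region of a product of two determinants, differing in how many
difference operators sit in each determinant. They are linked by summation by parts, one coordinate
and one operator at a time.

Up to a factor depending only on `j` (`wFun_eq_smul`), `w_j` does not depend on `j`; so the `j`-th
column of the first determinant depends on `j` only through `y_j` and the number `λ_j` of
derivatives `∇(b_1), …, ∇(b_{λ_j})` applied. Likewise the `i`-th row of the second determinant
depends on `i` only through `y_i` and the number `λ_i` of inverse derivatives. The left-hand side has
the levels `λ_k = k`, the right-hand side `λ_k = n`. (See `levelSum`.)

Moving one derivative in the coordinate `y_k` from the first determinant to the second changes the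
summand by `T(y + e_k) - T(y)`, where `T` is again a product of two determinants
(`tsum_by_parts`). All sums are finite because `w_j(x) = 0` for `x < 0` (`hFun_of_neg`). If `k ≠ n`,
the region and its translate by `e_k` differ only where `y_k = y_{k-1}` or `y_k = y_{k+1} + 1`.
Lowering `λ_k` from `μ + 1` to `μ`, the first determinant in `T` has two equal columns at
`y_k = y_{k-1}` provided `λ_{k-1} = μ`, and the second one two equal rows at `y_k = y_{k+1} + 1`
provided `λ_{k+1} = μ + 1`; hence the sum is unchanged (`levelSum_step`).

These moves suffice (`levelSum_eq`): the levels above `n` are lowered by repeatedly decreasing the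
top level, working through its coordinates from left to right, and the levels below `n` are raised by
repeatedly increasing the bottom level, working from right to left. The coordinate `k = n`, which
carries the constraint `y_n < h`, is never touched.
-/

/-- The discrete derivative `∇(b) f (x) = f(x+1) - (1/b) f(x)`. -/
noncomputable def nabla (b : ℝ) (f : ℤ → ℂ) : ℤ → ℂ :=
  fun x => f (x + 1) - ((b : ℂ))⁻¹ * f x

/-- The inverse operator `∇(b)⁻¹ f (x) = Σ_{n<0} b^{n+1} f(x+n)`. -/
noncomputable def nablaInv (b : ℝ) (f : ℤ → ℂ) : ℤ → ℂ :=
  fun x => ∑' k : ℕ, ((b : ℂ)) ^ (-(k : ℤ)) * f (x - 1 - k)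

/-- `∏_{k=1}^{j} ∇(b_k)` applied to `f`. -/
noncomputable def nablaIter (b : ℕ → ℝ) : ℕ → (ℤ → ℂ) → (ℤ → ℂ)
  | 0 => id
  | j + 1 => fun f => nabla (b (j + 1)) (nablaIter b j f)

/-- `∏_{k=1}^{i} ∇(b_k)⁻¹` applied to `f`. -/
noncomputable def nablaInvIter (b : ℕ → ℝ) : ℕ → (ℤ → ℂ) → (ℤ → ℂ)
  | 0 => id
  | i + 1 => fun f => nablaInv (b (i + 1)) (nablaInvIter b i f)

/-- The operator `∇(b_{(i,j]}) = ∏_{k=1}^{j} ∇(b_k) ∏_{k=1}^{i} ∇(b_k)⁻¹`. -/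
noncomputable def nablaRange (b : ℕ → ℝ) (i j : ℕ) (f : ℤ → ℂ) : ℤ → ℂ :=
  nablaIter b j (nablaInvIter b i f)

/-- The function `w_j(x | (ℓ,m]) = (1/2πi) ∮_{|z|=R} z^{x-1} ∏_{k=ℓ+1}^{m} (1-a_k b_j)/(1-a_k/z) dz`. -/
noncomputable def wFun (a b : ℕ → ℝ) (R : ℝ) (j ℓ m : ℕ) : ℤ → ℂ :=
  fun x => (2 * (Real.pi : ℂ) * Complex.I)⁻¹ *
    ∮ z in C(0, R),
      z ^ (x - 1) * ∏ k ∈ Finset.Icc (ℓ + 1) m,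
        ((1 - (a k : ℂ) * (b j : ℂ)) / (1 - (a k : ℂ) / z))

open Filter Topology

/-! ### Algebra of the difference operators -/

/-- `f` vanishes near `-∞`: the class of functions on which `nablaInv` is a genuine inverse. -/
def VanishBot (f : ℤ → ℂ) : Prop := ∀ᶠ t in atBot, f t = 0

lemma VanishBot.nabla {f : ℤ → ℂ} (hf : VanishBot f) (c : ℝ) : VanishBot (nabla c f) := by
  obtain ⟨A, hA⟩ := eventually_atBot.1 hf
  refine eventually_atBot.2 ⟨A - 1, fun t ht => ?_⟩
  simp [_root_.nabla, hA (t + 1) (by omega), hA t (by omega)]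

lemma VanishBot.nablaInv {f : ℤ → ℂ} (hf : VanishBot f) (c : ℝ) : VanishBot (nablaInv c f) := by
  obtain ⟨A, hA⟩ := eventually_atBot.1 hf
  refine eventually_atBot.2 ⟨A, fun t ht => ?_⟩
  have : ∀ k : ℕ, f (t - 1 - k) = 0 := fun k => hA _ (by omega)
  simp [_root_.nablaInv, this]

lemma VanishBot.nablaIter {f : ℤ → ℂ} (hf : VanishBot f) (b : ℕ → ℝ) :
    ∀ j, VanishBot (nablaIter b j f)
  | 0 => hf
  | j + 1 => (VanishBot.nablaIter hf b j).nabla _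

lemma VanishBot.nablaInvIter {f : ℤ → ℂ} (hf : VanishBot f) (b : ℕ → ℝ) :
    ∀ j, VanishBot (nablaInvIter b j f)
  | 0 => hf
  | j + 1 => (VanishBot.nablaInvIter hf b j).nablaInv _

/-- `∇(c) ∇(c)⁻¹ = 1` on functions vanishing near `-∞`. -/
lemma nabla_nablaInv {f : ℤ → ℂ} (hf : VanishBot f) (c : ℝ) : nabla c (nablaInv c f) = f := by
  obtain ⟨A, hA⟩ := eventually_atBot.1 hf
  funext x
  have hs : Summable fun k : ℕ => (c : ℂ) ^ (-(k : ℤ)) * f (x - k) := by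
    refine summable_of_ne_finset_zero (s := Finset.range (x - A).toNat) fun k hk => ?_
    rw [Finset.mem_range] at hk
    rw [hA _ (by omega), mul_zero]
  have h1 : nablaInv c f (x + 1) = ∑' k : ℕ, (c : ℂ) ^ (-(k : ℤ)) * f (x - k) := by
    simp [nablaInv]
  rw [nabla, h1, hs.tsum_eq_zero_add, nablaInv, ← tsum_mul_left]
  have hterm : ∀ k : ℕ, (c : ℂ) ^ (-((k + 1 : ℕ) : ℤ)) * f (x - (k + 1 : ℕ))
      = (c : ℂ)⁻¹ * ((c : ℂ) ^ (-(k : ℤ)) * f (x - 1 - k)) := by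
    intro k
    have e : x - ((k + 1 : ℕ) : ℤ) = x - 1 - k := by push_cast; ring
    rw [e, zpow_neg, zpow_neg, zpow_natCast, zpow_natCast, pow_succ, mul_inv]
    ring
  rw [tsum_congr hterm]
  simp

lemma nabla_comm (c d : ℝ) (f : ℤ → ℂ) : nabla c (nabla d f) = nabla d (nabla c f) := by
  funext x; simp only [nabla]; ring

lemma nabla_nablaIter_comm (b : ℕ → ℝ) (c : ℝ) (f : ℤ → ℂ) :
    ∀ j, nabla c (nablaIter b j f) = nablaIter b j (nabla c f)
  | 0 => rfl
  | j + 1 => by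
    change nabla c (nabla _ (nablaIter b j f)) = nabla _ (nablaIter b j (nabla c f))
    rw [nabla_comm, nabla_nablaIter_comm b c f j]

lemma nabla_nablaRange {f : ℤ → ℂ} (hf : VanishBot f) (b : ℕ → ℝ) (i j : ℕ) :
    nabla (b (i + 1)) (nablaRange b (i + 1) j f) = nablaRange b i j f := by
  rw [nablaRange, nabla_nablaIter_comm, nablaRange]
  congr 1
  exact nabla_nablaInv (hf.nablaInvIter b i) _

lemma nabla_smul (c : ℝ) (r : ℂ) (f : ℤ → ℂ) : nabla c (r • f) = r • nabla c f := by
  funext x; simp only [nabla, Pi.smul_apply, smul_eq_mul]; ring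

lemma nablaInv_smul (c : ℝ) (r : ℂ) (f : ℤ → ℂ) : nablaInv c (r • f) = r • nablaInv c f := by
  funext x
  simp only [nablaInv, Pi.smul_apply, smul_eq_mul, ← tsum_mul_left]
  exact tsum_congr fun k => by ring

lemma nablaRange_smul (b : ℕ → ℝ) (i j : ℕ) (r : ℂ) (f : ℤ → ℂ) :
    nablaRange b i j (r • f) = r • nablaRange b i j f := by
  have h1 : ∀ i, nablaInvIter b i (r • f) = r • nablaInvIter b i f := by
    intro i
    induction i with
    | zero => rfl
    | succ i ih => simp only [nablaInvIter, ih, nablaInv_smul]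
  have h2 : ∀ j g, nablaIter b j (r • g) = r • nablaIter b j g := by
    intro j g
    induction j with
    | zero => rfl
    | succ j ih => simp only [nablaIter, ih, nabla_smul]
  rw [nablaRange, h1, h2, nablaRange]

/-! ### The contour integrals -/

/-- The contour integral `w_j` stripped of its only `j`-dependent factor `∏ (1 - a_k b_j)`. -/
noncomputable def hFun (a : ℕ → ℝ) (R : ℝ) (ℓ m : ℕ) : ℤ → ℂ :=
  fun x => (2 * (Real.pi : ℂ) * Complex.I)⁻¹ *
    ∮ z in C(0, R), z ^ (x - 1) * ∏ k ∈ Finset.Icc (ℓ + 1) m, (1 - (a k : ℂ) / z)⁻¹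

lemma wFun_eq_smul (a b : ℕ → ℝ) (R : ℝ) (j ℓ m : ℕ) :
    wFun a b R j ℓ m
      = (∏ k ∈ Finset.Icc (ℓ + 1) m, (1 - (a k : ℂ) * (b j : ℂ))) • hFun a R ℓ m := by
  funext x
  simp only [wFun, hFun, Pi.smul_apply, smul_eq_mul, div_eq_mul_inv, Finset.prod_mul_distrib]
  rw [mul_left_comm]
  congr 1
  rw [← circleIntegral.integral_const_mul]
  congr 1
  funext z
  rw [mul_left_comm]

/-- The integrand is holomorphic outside the unit disc, so the radius may be enlarged; for
negative `x` the integral over a circle of radius `r` is `O(1/r)`. -/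
lemma hFun_of_neg {a : ℕ → ℝ} (ha : ∀ i, 1 ≤ i → 0 ≤ a i ∧ a i ≤ 1) {R : ℝ} (hR : 1 < R)
    (ℓ m : ℕ) {x : ℤ} (hx : x < 0) : hFun a R ℓ m x = 0 := by
  set g : ℂ → ℂ := fun z => z ^ (x - 1) * ∏ k ∈ Finset.Icc (ℓ + 1) m, (1 - (a k : ℂ) / z)⁻¹
    with hg
  have hk1 : ∀ k ∈ Finset.Icc (ℓ + 1) m, 0 ≤ a k ∧ a k ≤ 1 := fun k hk =>
    ha k (by have := (Finset.mem_Icc.1 hk).1; omega)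
  have hR0 : 0 < R := by linarith
  have hlow : ∀ k ∈ Finset.Icc (ℓ + 1) m, ∀ z : ℂ, R ≤ ‖z‖ →
      1 - 1 / R ≤ ‖1 - (a k : ℂ) / z‖ := by
    intro k hk z hz
    obtain ⟨h0, h1⟩ := hk1 k hk
    have h2 : ‖(a k : ℂ) / z‖ ≤ 1 / R := by
      rw [norm_div, Complex.norm_real, Real.norm_of_nonneg h0]
      exact div_le_div₀ zero_le_one h1 hR0 hz
    have h3 := norm_sub_norm_le (1 : ℂ) ((a k : ℂ) / z)
    rw [norm_one] at h3
    linarith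
  have hpos : 0 < 1 - 1 / R := by
    have : 1 / R < 1 := by rw [div_lt_one hR0]; exact hR
    linarith
  have hdiff : ∀ z : ℂ, R ≤ ‖z‖ → DifferentiableAt ℂ g z := by
    intro z hz
    have hz0 : z ≠ 0 := by
      rintro rfl
      simp at hz; linarith
    refine DifferentiableAt.mul (differentiableAt_zpow.2 (Or.inl hz0)) ?_
    refine DifferentiableAt.fun_finsetProd fun k hk => ?_
    refine DifferentiableAt.inv ?_ ?_
    · exact (differentiableAt_const _).sub
        ((differentiableAt_const _).div differentiableAt_id hz0)
    · exact norm_pos_iff.1 (hpos.trans_le (hlow k hk z hz))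
  have heq : ∀ r, R ≤ r → (∮ z in C(0, r), g z) = ∮ z in C(0, R), g z := by
    intro r hr
    refine Complex.circleIntegral_eq_of_differentiable_on_annulus_off_countable hR0 hr
      Set.countable_empty (fun z hz => (hdiff z ?_).continuousAt.continuousWithinAt)
      (fun z hz => hdiff z ?_)
    · simpa using hz.2
    · have := hz.1.2
      simp at this
      exact this.le
  set K : ℝ := ((1 - 1 / R)⁻¹) ^ (Finset.Icc (ℓ + 1) m).card with hK
  have hbound : ∀ r, R ≤ r → ‖∮ z in C(0, R), g z‖ ≤ 2 * Real.pi * K / r := by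
    intro r hr
    have hr0 : 0 < r := by linarith
    rw [← heq r hr]
    have hb : ∀ z ∈ Metric.sphere (0 : ℂ) r, ‖g z‖ ≤ (r ^ 2)⁻¹ * K := by
      intro z hz
      have hzr : ‖z‖ = r := by simpa using hz
      rw [hg]
      simp only [norm_mul, norm_zpow, norm_prod, norm_inv, hzr]
      gcongr
      · rw [← zpow_natCast, ← zpow_neg]
        exact zpow_le_zpow_right₀ (by linarith) (by push_cast; omega)
      · rw [hK, ← Finset.prod_const]
        refine Finset.prod_le_prod (fun _ _ => by positivity) fun k hk => ?_
        exact inv_anti₀ hpos (hlow k hk z (by rw [hzr]; exact hr))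
    refine (circleIntegral.norm_integral_le_of_norm_le_const hr0.le hb).trans (le_of_eq ?_)
    field_simp
  have hlim : Tendsto (fun r : ℝ => 2 * Real.pi * K / r) atTop (𝓝 0) :=
    tendsto_const_nhds.div_atTop tendsto_id
  have hle : ‖∮ z in C(0, R), g z‖ ≤ 0 :=
    ge_of_tendsto hlim (eventually_atTop.2 ⟨R, hbound⟩)
  have h0 : (∮ z in C(0, R), g z) = 0 := norm_le_zero_iff.1 hle
  rw [hFun, h0, mul_zero]

/-! ### Summation by parts in one coordinate -/

/-- The determinant with entries `p j i (y j)`: row `j` depends only on the coordinate `y j`. -/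
noncomputable def rowDet {N : ℕ} (p : Fin N → Fin N → ℤ → ℂ) (y : Fin N → ℤ) : ℂ :=
  Matrix.det (Matrix.of fun j i => p j i (y j))

section SumByParts

variable {N : ℕ}

lemma rowDet_update (p : Fin N → Fin N → ℤ → ℂ) (k : Fin N) (f : Fin N → ℤ → ℂ)
    (y : Fin N → ℤ) :
    rowDet (Function.update p k f) y
      = Matrix.det (Matrix.updateRow (Matrix.of fun j i => p j i (y j)) k fun i => f i (y k)) := by
  rw [rowDet]
  congr 1
  ext j i
  by_cases hj : j = k
  · subst hj; simp
  · simp [Matrix.updateRow_ne hj, Function.update_of_ne hj]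

/-- A determinant whose `k`-th row is `f (· + e) - β g`, split by multilinearity. -/
lemma rowDet_update_sub (p : Fin N → Fin N → ℤ → ℂ) (k : Fin N) (f g : Fin N → ℤ → ℂ) (β : ℂ)
    (y : Fin N → ℤ) :
    rowDet (Function.update p k fun i t => f i t - β * g i t) y
      = rowDet (Function.update p k f) y - β * rowDet (Function.update p k g) y := by
  simp only [rowDet_update]
  have : (fun i => f i (y k) - β * g i (y k))
      = (fun i => f i (y k)) + (-β) • fun i => g i (y k) := by
    funext i; simp; ring
  rw [this, Matrix.det_updateRow_add, Matrix.det_updateRow_smul]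
  ring

/-- Shifting the `k`-th row function is the same as shifting the `k`-th coordinate. -/
lemma rowDet_update_shift (p : Fin N → Fin N → ℤ → ℂ) (k : Fin N) (f : Fin N → ℤ → ℂ) (s : ℤ)
    (y : Fin N → ℤ) :
    rowDet (Function.update p k fun i t => f i (t + s)) y
      = rowDet (Function.update p k f) (y + Pi.single k s) := by
  rw [rowDet, rowDet]
  congr 1
  ext j i
  by_cases hj : j = k
  · subst hj; simp
  · simp [hj]

/-- The product of a determinant with rows vanishing near `-∞` and one with rows vanishing
near `+∞` is finitely supported. -/
lemma finite_support_rowDet_mul {p q : Fin N → Fin N → ℤ → ℂ}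
    (hp : ∀ j i, ∀ᶠ t in atBot, p j i t = 0) (hq : ∀ j i, ∀ᶠ t in atTop, q j i t = 0) :
    (Function.support fun y => rowDet p y * rowDet q y).Finite := by
  obtain ⟨A, hA⟩ := eventually_atBot.1 (eventually_all.2 fun j => eventually_all.2 (hp j))
  obtain ⟨B, hB⟩ := eventually_atTop.1 (eventually_all.2 fun j => eventually_all.2 (hq j))
  refine (Set.finite_Icc (fun _ : Fin N => A) (fun _ => B)).subset fun y hy => ?_
  rw [Function.mem_support, mul_ne_zero_iff] at hy
  refine ⟨fun j => ?_, fun j => ?_⟩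
  · by_contra hlt
    exact hy.1 (Matrix.det_eq_zero_of_row_eq_zero j fun i => hA _ (not_le.1 hlt).le j i)
  · by_contra hlt
    exact hy.2 (Matrix.det_eq_zero_of_row_eq_zero j fun i => hB _ (not_le.1 hlt).le j i)

lemma eventually_update {l : Filter ℤ} {p : Fin N → Fin N → ℤ → ℂ} {k : Fin N}
    {f : Fin N → ℤ → ℂ} (hp : ∀ j i, ∀ᶠ t in l, p j i t = 0) (hf : ∀ i, ∀ᶠ t in l, f i t = 0) :
    ∀ j i, ∀ᶠ t in l, Function.update p k f j i t = 0 := by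
  intro j i
  by_cases hj : j = k
  · subst hj; simpa using hf i
  · simpa [Function.update_of_ne hj] using hp j i

/-- A telescoping sum over a region `S` vanishes when the summed function `T` vanishes wherever
`S` and its translate by `e` differ. -/
lemma tsum_add_telescope (S : Set (Fin N → ℤ)) (e : Fin N → ℤ) (F T : (Fin N → ℤ) → ℂ)
    (hF : (Function.support F).Finite) (hT : (Function.support T).Finite)
    (hS : ∀ y, T y ≠ 0 → (y - e ∈ S ↔ y ∈ S)) :
    ∑' y : S, (F y + T (y + e) - T y) = ∑' y : S, F y := by
  classical
  have hFs : Summable (S.indicator F) :=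
    summable_of_hasFiniteSupport
      (hF.subset (Set.support_indicator.trans_subset Set.inter_subset_right))
  have hTs : Summable (S.indicator T) :=
    summable_of_hasFiniteSupport
      (hT.subset (Set.support_indicator.trans_subset Set.inter_subset_right))
  have hshift : ∀ y, S.indicator (fun y => T (y + e)) y = S.indicator T (y + e) := by
    intro y
    by_cases h0 : T (y + e) = 0
    · simp [Set.indicator_apply, h0]
    · have := hS _ h0
      rw [add_sub_cancel_right] at this
      simp [Set.indicator_apply, this]
  have hTs' : Summable fun y => S.indicator T (y + e) :=
    hTs.comp_injective (add_left_injective e)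
  have hTeq : ∑' y, S.indicator T (y + e) = ∑' y, S.indicator T y :=
    (Equiv.addRight e).tsum_eq (S.indicator T)
  rw [tsum_subtype S fun y => F y + T (y + e) - T y, tsum_subtype S F]
  have hsplit : S.indicator (fun y => F y + T (y + e) - T y)
      = fun y => S.indicator F y + S.indicator T (y + e) - S.indicator T y := by
    funext y
    rw [← hshift]
    by_cases hy : y ∈ S <;> simp [hy]
  rw [hsplit, (hFs.add hTs').tsum_sub hTs, hFs.tsum_add hTs', hTeq, add_sub_cancel_right]

/-- Summation by parts in the `k`-th coordinate over a region `S`. The boundary term is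
`T y = rowDet (p; φ) y * rowDet (q; ψ(· - 1)) y`, and `hT` says that `T` vanishes wherever
`S` and its translate by the `k`-th unit vector differ. -/
lemma tsum_by_parts (S : Set (Fin N → ℤ)) (k : Fin N) (p q : Fin N → Fin N → ℤ → ℂ)
    (φ ψ : Fin N → ℤ → ℂ) (β : ℂ)
    (hp : ∀ j i, ∀ᶠ t in atBot, p j i t = 0) (hq : ∀ j i, ∀ᶠ t in atTop, q j i t = 0)
    (hφ : ∀ i, ∀ᶠ t in atBot, φ i t = 0) (hψ : ∀ i, ∀ᶠ t in atTop, ψ i t = 0)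
    (hT : ∀ y, rowDet (Function.update p k φ) y
        * rowDet (Function.update q k fun i t => ψ i (t + -1)) y ≠ 0 →
        (y - Pi.single k 1 ∈ S ↔ y ∈ S)) :
    ∑' y : S, rowDet (Function.update p k fun i t => φ i (t + 1) - β * φ i t) y
        * rowDet (Function.update q k ψ) y
      = ∑' y : S, rowDet (Function.update p k φ) y
        * rowDet (Function.update q k fun i t => ψ i (t + -1) - β * ψ i t) y := by
  set T : (Fin N → ℤ) → ℂ := fun y => rowDet (Function.update p k φ) y
        * rowDet (Function.update q k fun i t => ψ i (t + -1)) y with hTdef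
  set F : (Fin N → ℤ) → ℂ := fun y => rowDet (Function.update p k φ) y
        * rowDet (Function.update q k fun i t => ψ i (t + -1) - β * ψ i t) y with hF
  have hψ' : ∀ i, ∀ᶠ t in atTop, ψ i (t + -1) = 0 := fun i =>
    (tendsto_atTop_add_const_right atTop (-1 : ℤ) tendsto_id).eventually (hψ i)
  have hψ'' : ∀ i, ∀ᶠ t in atTop, ψ i (t + -1) - β * ψ i t = 0 := fun i => by
    filter_upwards [hψ i, hψ' i] with t h1 h2
    simp [h1, h2]
  have hpt : ∀ y, rowDet (Function.update p k fun i t => φ i (t + 1) - β * φ i t) y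
        * rowDet (Function.update q k ψ) y = F y + T (y + Pi.single k 1) - T y := by
    intro y
    have e1 : rowDet (Function.update q k fun i t => ψ i (t + -1)) (y + Pi.single k 1)
        = rowDet (Function.update q k ψ) y := by
      rw [rowDet_update_shift]
      congr 1
      rw [add_assoc, ← Pi.single_add]; simp
    simp only [hF, hTdef, e1]
    rw [rowDet_update_sub, rowDet_update_sub, rowDet_update_shift p k φ 1]
    ring
  rw [tsum_congr fun y : S => hpt y]
  exact tsum_add_telescope S (Pi.single k 1) F T
    (finite_support_rowDet_mul (eventually_update hp hφ) (eventually_update hq hψ''))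
    (finite_support_rowDet_mul (eventually_update hp hφ) (eventually_update hq hψ')) hT

end SumByParts

/-! ### Moving the levels -/

section Levels

variable {N : ℕ}

/-- The chamber `W_N` cut by `y_r < h` (with `r` counted from `0`). -/
def chamber (r : Fin N) (h : ℤ) : Set (Fin N → ℤ) := {y | Monotone y ∧ y r < h}

/-- The sum over the cut chamber in which `lam j` derivatives act on the `j`-th column of the
first determinant and `lam i` inverse derivatives on the `i`-th row of the second one. Here
`u μ i` and `v μ j` are the functions carrying `μ` derivatives, resp. inverse derivatives. -/
noncomputable def levelSum (r : Fin N) (h : ℤ) (x z : Fin N → ℤ) (u v : ℕ → Fin N → ℤ → ℂ)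
    (lam : Fin N → ℕ) : ℂ :=
  ∑' y : chamber r h, rowDet (fun j i t => u (lam j) i (t - x i)) y
    * rowDet (fun i j t => v (lam i) j (z j - t)) y

variable {r : Fin N} {h : ℤ} {x z : Fin N → ℤ} {u v : ℕ → Fin N → ℤ → ℂ} {β : ℕ → ℂ}

/-- One derivative in the `k`-th coordinate may be moved from the first determinant to the second
when the levels of the neighbouring coordinates make the boundary determinants have two equal
rows. -/
lemma levelSum_step
    (hu0 : ∀ μ i, VanishBot (u μ i)) (hv0 : ∀ μ i, VanishBot (v μ i))
    (hu : ∀ μ i t, u (μ + 1) i t = u μ i (t + 1) - β μ * u μ i t)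
    (hv : ∀ μ i t, v μ i t = v (μ + 1) i (t + 1) - β μ * v (μ + 1) i t)
    {lam lam' : Fin N → ℕ} (k : Fin N) (hk : k ≠ r) {μ : ℕ}
    (hlam : lam k = μ + 1) (hlam' : lam' k = μ) (hne : ∀ j, j ≠ k → lam' j = lam j)
    (hup : ∀ j : Fin N, j.1 = k.1 + 1 → lam j = μ + 1)
    (hdown : ∀ j : Fin N, j.1 + 1 = k.1 → lam j = μ) :
    levelSum r h x z u v lam = levelSum r h x z u v lam' := by
  have hub : ∀ μ i, ∀ᶠ t in atBot, u μ i (t - x i) = 0 := fun μ i =>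
    (tendsto_atBot_add_const_right atBot (-x i) tendsto_id).eventually (hu0 μ i)
  have hvt : ∀ μ j, ∀ᶠ t in atTop, v μ j (z j - t) = 0 := fun μ j =>
    (tendsto_atBot_add_const_left atTop (z j) tendsto_neg_atTop_atBot).eventually (hv0 μ j)
  have key := tsum_by_parts (chamber r h) k (fun j i t => u (lam j) i (t - x i))
    (fun i j t => v (lam i) j (z j - t)) (fun i t => u μ i (t - x i))
    (fun j t => v (μ + 1) j (z j - t)) (β μ) (fun j i => hub _ _) (fun i j => hvt _ _)
    (hub μ) (hvt (μ + 1)) ?_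
  · rw [levelSum, levelSum]
    convert key using 6
    · rename_i j
      funext i t
      by_cases hj : j = k
      · subst hj
        simp only [hlam, Function.update_self, hu]
        congr 2; ring
      · simp [Function.update_of_ne hj]
    · rename_i j
      funext i t
      by_cases hj : j = k
      · subst hj; simp [hlam]
      · simp [Function.update_of_ne hj]
    · rename_i j
      funext i t
      by_cases hj : j = k
      · subst hj; simp [hlam']
      · simp [Function.update_of_ne hj, hne j hj]
    · rename_i j
      funext i t
      by_cases hj : j = k
      · subst hj
        simp only [hlam', Function.update_self]
        rw [hv μ]
        congr 2; ring
      · simp [Function.update_of_ne hj, hne j hj]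
  · intro y hy
    rw [mul_ne_zero_iff] at hy
    obtain ⟨hy1, hy2⟩ := hy
    -- a nonzero first determinant forces `y (k-1) ≠ y k`
    have hd : ∀ j : Fin N, j.1 + 1 = k.1 → y j ≠ y k := by
      intro j hj hjk
      have hjne : j ≠ k := by rintro rfl; omega
      refine hy1 (Matrix.det_zero_of_row_eq hjne ?_)
      funext i
      simp [Function.update_of_ne hjne, hdown j hj, hjk]
    -- a nonzero second determinant forces `y (k+1) ≠ y k - 1`
    have hu' : ∀ j : Fin N, j.1 = k.1 + 1 → y j ≠ y k - 1 := by
      intro j hj hjk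
      have hjne : j ≠ k := by rintro rfl; omega
      refine hy2 (Matrix.det_zero_of_row_eq hjne ?_)
      funext i
      simp [Function.update_of_ne hjne, hup j hj, hjk, sub_eq_add_neg]
    have hsub : ∀ j, (y - Pi.single k 1 : Fin N → ℤ) j = if j = k then y j - 1 else y j := by
      intro j
      by_cases hj : j = k
      · subst hj; simp
      · simp [hj]
    have hr : (y - Pi.single k 1 : Fin N → ℤ) r = y r := by simp [hsub, hk.symm]
    simp only [chamber, Set.mem_ofPred_eq, hr]
    refine and_congr_left fun _ => ⟨fun hm i j hij => ?_, fun hm i j hij => ?_⟩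
    · rcases hij.eq_or_lt with rfl | hlt
      · exact le_rfl
      have h1 := hm hij
      simp only [hsub] at h1
      by_cases hi : i = k
      · subst hi
        have hlt' : i.1 < j.1 := hlt
        let s : Fin N := ⟨i.1 + 1, by omega⟩
        have hs : s ≠ i := fun e => by have := congrArg Fin.val e; simp [s] at this
        have h2 := hm (show i ≤ s from by simp [Fin.le_def, s])
        have h3 := hm (show s ≤ j from by simp [Fin.le_def, s]; omega)
        simp only [hsub, hs, hlt.ne', if_true, if_false] at h2 h3
        have := hu' s rfl
        omega
      · simp only [hi, if_false] at h1
        split_ifs at h1 <;> omega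
    · rcases hij.eq_or_lt with rfl | hlt
      · exact le_rfl
      have h1 := hm hij
      simp only [hsub]
      by_cases hj : j = k
      · subst hj
        have hlt' : i.1 < j.1 := hlt
        let s : Fin N := ⟨j.1 - 1, by omega⟩
        have h2 := hm (show i ≤ s from by simp [Fin.le_def, s]; omega)
        have h3 := hm (show s ≤ j from by simp [Fin.le_def, s])
        have := hd s (by simp [s]; omega)
        simp only [hlt.ne, if_true, if_false]
        omega
      · simp only [hj, if_false]
        split_ifs <;> omega

/-- Starting from level `j + 1` in coordinate `j`, all levels can be brought to `n`. -/
lemma levelSum_eq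
    (hu0 : ∀ μ i, VanishBot (u μ i)) (hv0 : ∀ μ i, VanishBot (v μ i))
    (hu : ∀ μ i t, u (μ + 1) i t = u μ i (t + 1) - β μ * u μ i t)
    (hv : ∀ μ i t, v μ i t = v (μ + 1) i (t + 1) - β μ * v (μ + 1) i t)
    {n : ℕ} (hn : r.1 + 1 = n) :
    levelSum r h x z u v (fun j => j.1 + 1) = levelSum r h x z u v (fun _ => n) := by
  -- Above `n`: lower the maximal level from `L + 1` to `L`, for coordinates in increasing order.
  have down1 : ∀ L, n ≤ L → ∀ p, p ≤ N →
      levelSum r h x z u v (fun j => min (j.1 + 1) (L + 1))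
        = levelSum r h x z u v
          (fun j => if j.1 < p then min (j.1 + 1) L else min (j.1 + 1) (L + 1)) := by
    intro L hL p
    induction p with
    | zero => intro _; simp
    | succ p ih =>
      intro hp
      rw [ih (by omega)]
      by_cases hpL : p + 1 ≤ L
      · congr 1
        funext j
        split_ifs <;> omega
      · refine levelSum_step hu0 hv0 hu hv (⟨p, by omega⟩ : Fin N) (μ := L) ?_ ?_ ?_ ?_ ?_ ?_
        · intro e; have := congrArg Fin.val e; simp at this; omega
        · simp; omega
        · simp; omega
        · intro j hj
          have : j.1 ≠ p := fun e => hj (Fin.ext e)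
          split_ifs <;> omega
        · intro j hj
          simp only at hj ⊢
          split_ifs <;> omega
        · intro j hj
          simp only at hj ⊢
          split_ifs <;> omega
  have down2 : ∀ d, levelSum r h x z u v (fun j => min (j.1 + 1) (n + d))
      = levelSum r h x z u v (fun j => min (j.1 + 1) n) := by
    intro d
    induction d with
    | zero => rfl
    | succ d ih =>
      rw [← ih, ← add_assoc, down1 (n + d) (by omega) N le_rfl]
      simp
  -- Below `n`: raise the minimal level from `L` to `L + 1`, for coordinates in decreasing order.
  have up1 : ∀ L, L < n → ∀ p, p ≤ N →
      levelSum r h x z u v (fun j => min (max (j.1 + 1) L) n)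
        = levelSum r h x z u v (fun j => if N ≤ j.1 + p then min (max (j.1 + 1) (L + 1)) n
            else min (max (j.1 + 1) L) n) := by
    intro L hL p
    induction p with
    | zero =>
      intro _
      congr 1
      funext j
      have := j.2
      split_ifs <;> omega
    | succ p ih =>
      intro hp
      rw [ih (by omega)]
      by_cases hpL : L < N - p
      · congr 1
        funext j
        split_ifs <;> omega
      · refine (levelSum_step hu0 hv0 hu hv (⟨N - p - 1, by omega⟩ : Fin N) (μ := L)
          ?_ ?_ ?_ ?_ ?_ ?_).symm
        · intro e; have := congrArg Fin.val e; simp at this; omega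
        · simp only; split_ifs <;> omega
        · simp only; split_ifs <;> omega
        · intro j hj
          have : j.1 ≠ N - p - 1 := fun e => hj (Fin.ext e)
          split_ifs <;> omega
        · intro j hj
          simp only at hj ⊢
          split_ifs <;> omega
        · intro j hj
          simp only at hj ⊢
          split_ifs <;> omega
  have up2 : ∀ L, L ≤ n → levelSum r h x z u v (fun j => min (j.1 + 1) n)
      = levelSum r h x z u v (fun j => min (max (j.1 + 1) L) n) := by
    intro L
    induction L with
    | zero => intro _; simp
    | succ L ih =>
      intro hL
      rw [ih (by omega), up1 L (by omega) N le_rfl]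
      simp
  have e1 : (fun j : Fin N => j.1 + 1) = fun j => min (j.1 + 1) (n + N) := by
    funext j; have := j.2; omega
  have e2 : (fun j : Fin N => min (max (j.1 + 1) n) n) = fun _ => n := by
    funext j; omega
  rw [e1, down2, up2 n le_rfl, e2]

end Levels

/-- **Lemma 3.2** (moving discrete derivatives between the two determinants in the
constrained sum over `W_N`). -/
theorem lemma_B
    (N : ℕ) (hN : 1 ≤ N)
    (a b : ℕ → ℝ)
    (ha : ∀ i, 1 ≤ i → 0 ≤ a i ∧ a i ≤ 1)
    (hb : ∀ j, 1 ≤ j → j ≤ N → 0 < b j ∧ b j ≤ 1)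
    (hab : ∀ i j, 1 ≤ i → 1 ≤ j → j ≤ N → 0 < a i * b j ∧ a i * b j < 1)
    (x z : Fin N → ℤ) (hx : Monotone x) (hz : Monotone z)
    (n : ℕ) (hn1 : 1 ≤ n) (hnN : n < N)
    (h : ℤ)
    (m M : ℕ) (hm : 0 < m) (hmM : m < M)
    (R : ℝ) (hR : ∀ k, 1 ≤ k → k ≤ N → 1 / b k < R) :
    (∑' y : {y : Fin N → ℤ // Monotone y ∧ y ⟨n - 1, by omega⟩ < h},
        Matrix.det (Matrix.of fun i j : Fin N =>
            nablaRange b (i.1 + 1) (j.1 + 1) (wFun a b R (j.1 + 1) 0 m)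
              (y.1 j - x i))
          * Matrix.det (Matrix.of fun i j : Fin N =>
              nablaRange b (i.1 + 1) (j.1 + 1) (wFun a b R (j.1 + 1) m M)
                (z j - y.1 i)))
      = ∑' y : {y : Fin N → ℤ // Monotone y ∧ y ⟨n - 1, by omega⟩ < h},
          Matrix.det (Matrix.of fun i j : Fin N =>
              nablaRange b (i.1 + 1) n (wFun a b R (j.1 + 1) 0 m)
                (y.1 j - x i))
            * Matrix.det (Matrix.of fun i j : Fin N =>
                nablaRange b n (j.1 + 1) (wFun a b R (j.1 + 1) m M)
                  (z j - y.1 i)) := by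
  have hR1 : 1 < R := by
    obtain ⟨h0, h1⟩ := hb 1 le_rfl hN
    exact ((one_le_div h0).2 h1).trans_lt (hR 1 le_rfl hN)
  have hH : ∀ ℓ m, VanishBot (hFun a R ℓ m) := fun ℓ m =>
    eventually_atBot.2 ⟨-1, fun t ht => hFun_of_neg ha hR1 ℓ m (by omega)⟩
  have hw : ∀ j ℓ m, VanishBot (wFun a b R j ℓ m) := fun j ℓ m => by
    rw [wFun_eq_smul]
    filter_upwards [hH ℓ m] with t ht
    simp [ht]
  -- In the first determinant the `j`-dependent prefactors of `w_j` are pulled out, so that its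
  -- columns differ only in the number of derivatives.
  have hfirst : ∀ (lam : Fin N → ℕ) (y : Fin N → ℤ),
      Matrix.det (Matrix.of fun i j : Fin N =>
        nablaRange b (i.1 + 1) (lam j) (wFun a b R (j.1 + 1) 0 m) (y j - x i))
      = (∏ j : Fin N, ∏ k ∈ Finset.Icc (0 + 1) m, (1 - (a k : ℂ) * (b (j.1 + 1) : ℂ)))
        * rowDet (fun j i t => nablaRange b (i.1 + 1) (lam j) (hFun a R 0 m) (t - x i)) y := by
    intro lam y
    rw [rowDet, ← Matrix.det_mul_column, ← Matrix.det_transpose]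
    congr 1
    ext j i
    simp [wFun_eq_smul, nablaRange_smul]
  have key := levelSum_eq (r := (⟨n - 1, by omega⟩ : Fin N)) (h := h) (x := x) (z := z)
    (u := fun μ i => nablaRange b (i.1 + 1) μ (hFun a R 0 m))
    (v := fun μ j => nablaRange b μ (j.1 + 1) (wFun a b R (j.1 + 1) m M))
    (β := fun μ => ((b (μ + 1) : ℝ) : ℂ)⁻¹)
    (fun μ i => ((hH 0 m).nablaInvIter b _).nablaIter b _)
    (fun μ j => ((hw _ m M).nablaInvIter b _).nablaIter b _)
    (fun μ i t => rfl)
    (fun μ j t => (congrFun (nabla_nablaRange (hw _ m M) b μ _) t).symm)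
    (n := n) (by simp; omega)
  have h1 := hfirst fun j => j.1 + 1
  have h2 := hfirst fun _ => n
  simp only [h1, h2, mul_assoc, tsum_mul_left]
  exact congrArg _ key
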